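/- Let G be a countable discrete group, let A and B be finite subgroups of G, let m_A and m_B be the uniform probability measures on A and B respectively, and let d ≥ 2 be an integer. Set μ = m_A * m_B and μ̃ = ((d−1)/d)·m_A + (1/d)·m_B. Then the asymptotic entropies satisfy h(G, μ̃) = ((d−1)/d²) · h(G, μ). In particular, if h(G,μ) ≤ d·h(G,μ̃), then h(G,μ) = 0. -/

import Mathlib

open Filter Topology
open scoped Classical

/-- A probability measure on a countable discrete group `G`:
a nonnegative function summing to `1`. -/
def IsProbMeasure {G : Type*} (μ : G → ℝ) : Prop :=
  (∀ g, 0 ≤ μ g) ∧ HasSum μ 1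

/-- Convolution of two measures on a discrete group: `(μ*ν)(g) = ∑_h μ(h) ν(h⁻¹g)`. -/
noncomputable def conv {G : Type*} [Group G] (μ ν : G → ℝ) : G → ℝ :=
  fun g => ∑' h, μ h * ν (h⁻¹ * g)

/-- Convolution powers of a measure, with `μ^{*0} = δ_e`. -/
noncomputable def convPow {G : Type*} [Group G] (μ : G → ℝ) : ℕ → G → ℝ
  | 0 => fun g => if g = 1 then 1 else 0
  | n + 1 => conv (convPow μ n) μ

/-- The entropy `H(μ) = ∑_g −μ(g) log μ(g) ∈ [0,∞]` of a probability measure on a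
countable discrete group. -/
noncomputable def entropy {G : Type*} (μ : G → ℝ) : ENNReal :=
  ∑' g, ENNReal.ofReal (-(μ g * Real.log (μ g)))

/-- The uniform probability measure on a finite subgroup `A` of `G`. -/
noncomputable def uniformOnSubgroup {G : Type*} [Group G] (A : Subgroup G) : G → ℝ :=
  fun g => if g ∈ A then (Nat.card A : ℝ)⁻¹ else 0

open Real (negMulLog)

section SubadditiveEntropy

theorem negMulLog_add_le {x y : ℝ} (hx : 0 ≤ x) (hy : 0 ≤ y) :
    negMulLog (x + y) ≤ negMulLog x + negMulLog y := by
  have key : ∀ {a b : ℝ}, 0 ≤ a → 0 ≤ b → a * Real.log a ≤ a * Real.log (a + b) := by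
    intro a b ha hb
    rcases ha.eq_or_lt with rfl | ha
    · simp
    · gcongr
      linarith
  have h1 := key hx hy
  have h2 := key hy hx
  rw [add_comm y x] at h2
  simp only [Real.negMulLog_eq_neg]
  linarith

theorem negMulLog_sum_le {ι : Type*} (s : Finset ι) {x : ι → ℝ} (hx : ∀ i ∈ s, 0 ≤ x i) :
    negMulLog (∑ i ∈ s, x i) ≤ ∑ i ∈ s, negMulLog (x i) := by
  induction s using Finset.induction_on with
  | empty => simp
  | insert a s ha ih =>
    rw [Finset.sum_insert ha, Finset.sum_insert ha]
    have hs : ∀ i ∈ s, 0 ≤ x i := fun i hi => hx i (Finset.mem_insert_of_mem hi)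
    exact (negMulLog_add_le (hx a (Finset.mem_insert_self a s)) (Finset.sum_nonneg hs)).trans
      (add_le_add_right (ih hs) _)

theorem sum_negMulLog_le_log_card {ι : Type*} (s : Finset ι) {p : ι → ℝ}
    (hp : ∀ i ∈ s, 0 ≤ p i) (hp1 : ∑ i ∈ s, p i = 1) :
    ∑ i ∈ s, negMulLog (p i) ≤ Real.log s.card := by
  have hs : s.Nonempty := by
    rw [Finset.nonempty_iff_ne_empty]
    rintro rfl
    simp at hp1
  have hc : (0 : ℝ) < s.card := by exact_mod_cast hs.card_pos
  have h := Real.concaveOn_negMulLog.le_map_sum (t := s) (w := fun _ => (s.card : ℝ)⁻¹) (p := p)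
    (fun _ _ => by positivity) (by simp [hc.ne']) (fun i hi => hp i hi)
  simp only [smul_eq_mul, ← Finset.mul_sum, hp1, mul_one] at h
  rw [Real.negMulLog, Real.log_inv, neg_mul_neg] at h
  exact le_of_mul_le_mul_left h (inv_pos.mpr hc)

end SubadditiveEntropy

section MonoidAlgebraEntropy

variable {G : Type*}

/-- The real-valued entropy of a finitely supported function. -/
noncomputable def realEntropy (x : MonoidAlgebra ℝ G) : ℝ :=
  ∑' g, negMulLog (x.coeff g)

theorem summable_negMulLog_coeff (x : MonoidAlgebra ℝ G) :
    Summable fun g => negMulLog (x.coeff g) :=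
  summable_of_ne_finset_zero (s := x.coeff.support) fun g hg => by
    simp [Finsupp.notMem_support_iff.mp hg]

theorem IsProbMeasure.le_one {f : G → ℝ} (hf : IsProbMeasure f) (g : G) : f g ≤ 1 :=
  le_hasSum hf.2 g fun j _ => hf.1 j

theorem IsProbMeasure.toReal_entropy {x : MonoidAlgebra ℝ G} (hx : IsProbMeasure x.coeff) :
    (entropy x.coeff).toReal = realEntropy x := by
  have h : ∀ g, 0 ≤ -(x.coeff g * Real.log (x.coeff g)) := fun g => by
    have := Real.negMulLog_nonneg (hx.1 g) (hx.le_one g)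
    simpa [Real.negMulLog_eq_neg] using this
  rw [entropy, ENNReal.tsum_toReal_eq fun _ => ENNReal.ofReal_ne_top, realEntropy]
  exact tsum_congr fun g => by rw [ENNReal.toReal_ofReal (h g), Real.negMulLog_eq_neg]

theorem isProbMeasure_mixture {ι : Type*} {s : Finset ι} {p : ι → ℝ}
    {ν : ι → MonoidAlgebra ℝ G} (hp : ∀ i ∈ s, 0 ≤ p i) (hp1 : ∑ i ∈ s, p i = 1)
    (hν : ∀ i ∈ s, IsProbMeasure (ν i).coeff) :
    IsProbMeasure (∑ i ∈ s, p i • ν i).coeff := by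
  constructor
  · intro g
    simp only [MonoidAlgebra.coeff_sum, MonoidAlgebra.coeff_smul, Finsupp.finsetSum_apply,
      Finsupp.smul_apply, smul_eq_mul]
    exact Finset.sum_nonneg fun i hi => mul_nonneg (hp i hi) ((hν i hi).1 g)
  · have h := hasSum_sum fun i (hi : i ∈ s) => (hν i hi).2.mul_left (p i)
    simp only [mul_one, hp1] at h
    have heq : ⇑(∑ i ∈ s, p i • ν i).coeff = fun g => ∑ i ∈ s, p i * (ν i).coeff g := by
      funext g
      simp
    rw [heq]
    exact h

theorem sum_mul_realEntropy_le {ι : Type*} {s : Finset ι} {p : ι → ℝ}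
    {ν : ι → MonoidAlgebra ℝ G} (hp : ∀ i ∈ s, 0 ≤ p i) (hp1 : ∑ i ∈ s, p i = 1)
    (hν : ∀ i ∈ s, IsProbMeasure (ν i).coeff) :
    ∑ i ∈ s, p i * realEntropy (ν i) ≤ realEntropy (∑ i ∈ s, p i • ν i) := by
  have h := hasSum_sum fun i (_ : i ∈ s) => (summable_negMulLog_coeff (ν i)).hasSum.mul_left (p i)
  refine hasSum_le (fun g => ?_) h (summable_negMulLog_coeff _).hasSum
  simpa using Real.concaveOn_negMulLog.le_map_sum hp hp1 fun i hi => (hν i hi).1 g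

theorem realEntropy_mixture_le {ι : Type*} {s : Finset ι} {p : ι → ℝ}
    {ν : ι → MonoidAlgebra ℝ G} (hp : ∀ i ∈ s, 0 ≤ p i) (hp1 : ∑ i ∈ s, p i = 1)
    (hν : ∀ i ∈ s, IsProbMeasure (ν i).coeff) :
    realEntropy (∑ i ∈ s, p i • ν i) ≤ ∑ i ∈ s, p i * realEntropy (ν i) + Real.log s.card := by
  have h1 := hasSum_sum fun i (_ : i ∈ s) => (summable_negMulLog_coeff (ν i)).hasSum.mul_left (p i)
  have h2 := hasSum_sum fun i (hi : i ∈ s) => (hν i hi).2.mul_right (negMulLog (p i))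
  have h3 := hasSum_le (fun g => ?_) (summable_negMulLog_coeff (∑ i ∈ s, p i • ν i)).hasSum
    (h1.add h2)
  · refine h3.trans (add_le_add le_rfl ?_)
    simpa using sum_negMulLog_le_log_card s hp hp1
  · rw [← Finset.sum_add_distrib]
    simp only [MonoidAlgebra.coeff_sum, MonoidAlgebra.coeff_smul, Finsupp.finsetSum_apply,
      Finsupp.smul_apply, smul_eq_mul]
    refine (negMulLog_sum_le s fun i hi => mul_nonneg (hp i hi) ((hν i hi).1 g)).trans
      (Finset.sum_le_sum fun i _ => ?_)
    rw [Real.negMulLog_mul, add_comm]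

variable [Group G]

theorem IsProbMeasure.single_mul {x : MonoidAlgebra ℝ G} (hx : IsProbMeasure x.coeff) (g : G) :
    IsProbMeasure (MonoidAlgebra.single g 1 * x).coeff := by
  constructor
  · intro h
    simpa using hx.1 _
  · have := (Equiv.mulLeft g⁻¹).hasSum_iff.mpr hx.2
    convert this using 1
    funext h
    simp

theorem IsProbMeasure.mul_single {x : MonoidAlgebra ℝ G} (hx : IsProbMeasure x.coeff) (g : G) :
    IsProbMeasure (x * MonoidAlgebra.single g 1).coeff := by
  constructor
  · intro h
    simpa using hx.1 _
  · have := (Equiv.mulRight g⁻¹).hasSum_iff.mpr hx.2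
    convert this using 1
    funext h
    simp

theorem realEntropy_single_mul (x : MonoidAlgebra ℝ G) (g : G) :
    realEntropy (MonoidAlgebra.single g 1 * x) = realEntropy x := by
  rw [realEntropy, realEntropy, ← (Equiv.mulLeft g⁻¹).tsum_eq fun h => negMulLog (x.coeff h)]
  simp

theorem realEntropy_mul_single (x : MonoidAlgebra ℝ G) (g : G) :
    realEntropy (x * MonoidAlgebra.single g 1) = realEntropy x := by
  rw [realEntropy, realEntropy, ← (Equiv.mulRight g⁻¹).tsum_eq fun h => negMulLog (x.coeff h)]
  simp

theorem conv_coeff (x y : MonoidAlgebra ℝ G) :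
    conv x.coeff y.coeff = (x * y).coeff := by
  funext g
  rw [MonoidAlgebra.coeff_mul_apply_left, conv, Finsupp.sum]
  exact tsum_eq_sum fun h hh => by simp [Finsupp.notMem_support_iff.mp hh]

theorem convPow_coeff (x : MonoidAlgebra ℝ G) (n : ℕ) :
    convPow x.coeff n = (x ^ n).coeff := by
  induction n with
  | zero =>
    funext g
    simp [convPow, MonoidAlgebra.one_def, Finsupp.single_apply, eq_comm]
  | succ n ih => rw [convPow, ih, conv_coeff, pow_succ]

/-- The uniform measure on a finite subgroup as an element of the group algebra. -/
noncomputable def uniformElement (A : Subgroup G) (hA : (A : Set G).Finite) : MonoidAlgebra ℝ G :=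
  ∑ h ∈ hA.toFinset, (hA.toFinset.card : ℝ)⁻¹ • MonoidAlgebra.single h 1

variable {A : Subgroup G} (hA : (A : Set G).Finite)

theorem card_toFinset_pos : 0 < hA.toFinset.card :=
  Finset.card_pos.mpr ⟨1, by simp [one_mem]⟩

theorem sum_inv_card_toFinset :
    ∑ _h ∈ hA.toFinset, (hA.toFinset.card : ℝ)⁻¹ = 1 := by
  have := card_toFinset_pos hA
  simp only [Finset.sum_const, nsmul_eq_mul]
  field_simp

theorem uniformElement_coeff : ⇑(uniformElement A hA).coeff = uniformOnSubgroup A := by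
  have hc : Nat.card A = hA.toFinset.card := Nat.card_eq_card_finite_toFinset hA
  funext g
  simp [uniformElement, uniformOnSubgroup, Finsupp.single_apply, hc]

theorem single_mul_uniformElement {g : G} (hg : g ∈ A) :
    MonoidAlgebra.single g 1 * uniformElement A hA = uniformElement A hA := by
  ext h
  rw [MonoidAlgebra.coeff_single_mul_apply, uniformElement_coeff]
  simp [uniformOnSubgroup, A.mul_mem_cancel_left (A.inv_mem hg)]

theorem uniformElement_mul (x : MonoidAlgebra ℝ G) : uniformElement A hA * x =
    ∑ h ∈ hA.toFinset, (hA.toFinset.card : ℝ)⁻¹ • (MonoidAlgebra.single h 1 * x) := by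
  simp only [uniformElement, Finset.sum_mul, smul_mul_assoc]

theorem mul_uniformElement (x : MonoidAlgebra ℝ G) : x * uniformElement A hA =
    ∑ h ∈ hA.toFinset, (hA.toFinset.card : ℝ)⁻¹ • (x * MonoidAlgebra.single h 1) := by
  simp only [uniformElement, Finset.mul_sum, mul_smul_comm]

theorem uniformElement_mul_self :
    uniformElement A hA * uniformElement A hA = uniformElement A hA := by
  rw [uniformElement_mul, Finset.sum_congr rfl fun h hh => by
    rw [single_mul_uniformElement hA (by simpa using hh)], ← Finset.sum_smul,
    sum_inv_card_toFinset, one_smul]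

variable {x : MonoidAlgebra ℝ G}

theorem IsProbMeasure.uniformElement_mul (hx : IsProbMeasure x.coeff) :
    IsProbMeasure (uniformElement A hA * x).coeff := by
  rw [_root_.uniformElement_mul]
  exact isProbMeasure_mixture (fun _ _ => by positivity) (sum_inv_card_toFinset hA)
    fun h _ => hx.single_mul h

theorem IsProbMeasure.mul_uniformElement (hx : IsProbMeasure x.coeff) :
    IsProbMeasure (x * uniformElement A hA).coeff := by
  rw [_root_.mul_uniformElement]
  exact isProbMeasure_mixture (fun _ _ => by positivity) (sum_inv_card_toFinset hA)
    fun h _ => hx.mul_single h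

theorem IsProbMeasure.abs_realEntropy_uniformElement_mul_sub_le (hx : IsProbMeasure x.coeff) :
    |realEntropy (uniformElement A hA * x) - realEntropy x| ≤ Real.log hA.toFinset.card := by
  have hn : ∀ h ∈ hA.toFinset, (0 : ℝ) ≤ (hA.toFinset.card : ℝ)⁻¹ := fun _ _ => by positivity
  have h1 := sum_mul_realEntropy_le hn (sum_inv_card_toFinset hA) fun h _ => hx.single_mul h
  have h2 := realEntropy_mixture_le hn (sum_inv_card_toFinset hA) fun h _ => hx.single_mul h
  simp only [realEntropy_single_mul, ← Finset.sum_mul, sum_inv_card_toFinset, one_mul,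
    ← _root_.uniformElement_mul] at h1 h2
  rw [abs_le]
  constructor <;> linarith [Real.log_natCast_nonneg hA.toFinset.card]

theorem IsProbMeasure.abs_realEntropy_mul_uniformElement_sub_le (hx : IsProbMeasure x.coeff) :
    |realEntropy (x * uniformElement A hA) - realEntropy x| ≤ Real.log hA.toFinset.card := by
  have hn : ∀ h ∈ hA.toFinset, (0 : ℝ) ≤ (hA.toFinset.card : ℝ)⁻¹ := fun _ _ => by positivity
  have h1 := sum_mul_realEntropy_le hn (sum_inv_card_toFinset hA) fun h _ => hx.mul_single h
  have h2 := realEntropy_mixture_le hn (sum_inv_card_toFinset hA) fun h _ => hx.mul_single h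
  simp only [realEntropy_mul_single, ← Finset.sum_mul, sum_inv_card_toFinset, one_mul,
    ← _root_.mul_uniformElement] at h1 h2
  rw [abs_le]
  constructor <;> linarith [Real.log_natCast_nonneg hA.toFinset.card]

theorem isProbMeasure_one : IsProbMeasure (1 : MonoidAlgebra ℝ G).coeff := by
  constructor
  · intro g
    simp only [MonoidAlgebra.one_def, MonoidAlgebra.coeff_single, Finsupp.single_apply]
    split_ifs <;> norm_num
  · convert hasSum_ite_eq (1 : G) (1 : ℝ) using 2 with g
    simp [MonoidAlgebra.one_def, Finsupp.single_apply, eq_comm]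

end MonoidAlgebraEntropy

section AlternatingWords

/-- The alternating product `b^s (ab)^j a^t` indexed by `(j, s, t)`, with `s, t ∈ {0, 1}`. -/
def alternatingWord {M : Type*} [Monoid M] (a b : M) (i : ℕ × Bool × Bool) : M :=
  (bif i.2.1 then b else 1) * (a * b) ^ i.1 * (bif i.2.2 then a else 1)

/-- The index of the alternating word obtained from the word of index `i` by appending `a`. -/
def appendFst (i : ℕ × Bool × Bool) : ℕ × Bool × Bool :=
  (i.1, i.2.1, true)

/-- The index of the alternating word obtained from the word of index `i` by appending `b`. -/
def appendSnd : ℕ × Bool × Bool → ℕ × Bool × Bool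
  | (j, s, true) => (j + 1, s, false)
  | (0, _, false) => (0, true, false)
  | (j + 1, s, false) => (j + 1, s, false)

variable {M : Type*} [Monoid M] {a b : M}

theorem alternatingWord_mul_fst (ha : a * a = a) (i : ℕ × Bool × Bool) :
    alternatingWord a b i * a = alternatingWord a b (appendFst i) := by
  obtain ⟨j, s, t⟩ := i
  cases t <;> simp [alternatingWord, appendFst, mul_assoc, ha]

theorem alternatingWord_mul_snd (hb : b * b = b) (i : ℕ × Bool × Bool) :
    alternatingWord a b i * b = alternatingWord a b (appendSnd i) := by
  obtain ⟨j, s, t⟩ := i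
  cases t
  · cases j
    · cases s <;> simp [alternatingWord, appendSnd, hb]
    · simp [alternatingWord, appendSnd, pow_succ, mul_assoc, hb]
  · simp [alternatingWord, appendSnd, pow_succ, mul_assoc]

theorem appendSnd_fst (i : ℕ × Bool × Bool) :
    (appendSnd i).1 = i.1 + bif i.2.2 then 1 else 0 := by
  obtain ⟨j, s, t⟩ := i
  cases t
  · cases j <;> simp [appendSnd]
  · simp [appendSnd]

theorem appendSnd_snd_snd (i : ℕ × Bool × Bool) : (appendSnd i).2.2 = false := by
  obtain ⟨j, s, t⟩ := i
  cases t
  · cases j <;> simp [appendSnd]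
  · simp [appendSnd]

open Finsupp in
/-- The power `(αa + βb)^(n+1)` is a convex combination of alternating words, for which the mean
number of factors `ab` is `nαβ`. -/
theorem exists_pow_eq_linearCombination_alternatingWord {R : Type*} [Ring R] [Algebra ℝ R]
    {a b : R} (ha : a * a = a) (hb : b * b = b) {α β : ℝ} (hα : 0 ≤ α) (hβ : 0 ≤ β)
    (hαβ : α + β = 1) (n : ℕ) :
    ∃ p : (ℕ × Bool × Bool) →₀ ℝ, 0 ≤ p ∧
      p.support ⊆ Finset.range (n + 1) ×ˢ Finset.univ ∧
      linearCombination ℝ (fun _ => (1 : ℝ)) p = 1 ∧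
      linearCombination ℝ (fun i => (i.1 : ℝ)) p = n * (α * β) ∧
      linearCombination ℝ (fun i => bif i.2.2 then (1 : ℝ) else 0) p = α ∧
      (α • a + β • b) ^ (n + 1) = linearCombination ℝ (alternatingWord a b) p := by
  induction n with
  | zero =>
    refine ⟨single (0, false, true) α + single (0, true, false) β,
      add_nonneg (by simpa using hα) (by simpa using hβ), ?_, ?_, ?_, ?_, ?_⟩
    · refine support_add.trans (Finset.union_subset ?_ ?_) <;>
        exact support_single_subset.trans (by simp)
    all_goals simp [alternatingWord, hαβ]
  | succ n ih =>
    obtain ⟨p, hp, hs, h1, hj, ht, hpow⟩ := ih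
    refine ⟨α • p.mapDomain appendFst + β • p.mapDomain appendSnd,
      add_nonneg (smul_nonneg hα (mapDomain_nonneg hp)) (smul_nonneg hβ (mapDomain_nonneg hp)),
      ?_, ?_, ?_, ?_, ?_⟩
    · have hbound : ∀ f : ℕ × Bool × Bool → ℕ × Bool × Bool, (∀ i, (f i).1 ≤ i.1 + 1) → ∀ c : ℝ,
          (c • p.mapDomain f).support ⊆ Finset.range (n + 1 + 1) ×ˢ Finset.univ := by
        intro f hf c i hi
        obtain ⟨k, hk, rfl⟩ := Finset.mem_image.mp (mapDomain_support (support_smul hi))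
        have := hs hk
        simp only [Finset.mem_product, Finset.mem_range, Finset.mem_univ, and_true] at this ⊢
        have := hf k
        omega
      refine support_add.trans (Finset.union_subset (hbound _ (fun i => ?_) _)
        (hbound _ (fun i => ?_) _))
      · simp [appendFst]
      · rw [appendSnd_fst]
        cases i.2.2 <;> simp
    · simp only [map_add, map_smul, linearCombination_mapDomain, Function.comp_def, h1]
      simpa using hαβ
    · have h2 : linearCombination ℝ (fun i : ℕ × Bool × Bool => ((appendSnd i).1 : ℝ)) p =
          n * (α * β) + α := by
        refine Eq.trans ?_ (congrArg₂ (· + ·) hj ht)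
        simp only [linearCombination_apply, ← Finsupp.sum_add, ← smul_add, appendSnd_fst]
        refine Finsupp.sum_congr fun i _ => ?_
        cases i.2.2 <;> simp
      simp only [map_add, map_smul, linearCombination_mapDomain, Function.comp_def, h2]
      simp only [appendFst, hj, smul_eq_mul]
      push_cast
      linear_combination (n : ℝ) * (α * β) * hαβ
    · simp only [map_add, map_smul, linearCombination_mapDomain, Function.comp_def,
        appendSnd_snd_snd]
      simp only [appendFst, cond_true, cond_false, h1]
      simp [linearCombination_apply]
    · rw [pow_succ, hpow, mul_add, mul_smul_comm, mul_smul_comm]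
      simp only [map_add, map_smul, linearCombination_mapDomain, Function.comp_def,
        ← alternatingWord_mul_fst ha, ← alternatingWord_mul_snd hb]
      simp only [linearCombination_apply, Finsupp.sum_mul, smul_mul_assoc]

end AlternatingWords

section LinearGrowth

theorem exists_abs_sub_mul_le {H : ℕ → ℝ} {L : ℝ}
    (hL : Tendsto (fun n : ℕ => H n / n) atTop (𝓝 L)) {ε : ℝ} (hε : 0 < ε) :
    ∃ K, ∀ n : ℕ, |H n - L * n| ≤ ε * n + K := by
  obtain ⟨N, hN⟩ := Metric.tendsto_atTop.mp hL ε hε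
  refine ⟨∑ n ∈ Finset.range (N + 1), |H n - L * n|, fun n => ?_⟩
  have hsum : 0 ≤ ∑ n ∈ Finset.range (N + 1), |H n - L * n| :=
    Finset.sum_nonneg fun _ _ => abs_nonneg _
  rcases lt_or_ge n (N + 1) with hn | hn
  · have h := Finset.single_le_sum (f := fun n : ℕ => |H n - L * n|) (fun _ _ => abs_nonneg _)
      (Finset.mem_range.mpr hn)
    have : 0 ≤ ε * n := by positivity
    linarith
  · have hn0 : (0 : ℝ) < n := by exact_mod_cast (by omega : 0 < n)
    have h := hN n (by omega)
    rw [Real.dist_eq] at h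
    have heq : H n - L * n = (H n / n - L) * n := by field_simp
    rw [heq, abs_mul, abs_of_pos hn0]
    have := mul_le_mul_of_nonneg_right h.le hn0.le
    linarith

theorem tendsto_div_of_abs_sub_le {u : ℕ → ℝ} {c : ℝ}
    (hu : ∀ ε > 0, ∃ K, ∀ n : ℕ, |u (n + 1) - c * n| ≤ ε * n + K + Real.log (n + 1)) :
    Tendsto (fun n : ℕ => u n / n) atTop (𝓝 c) := by
  rw [← tendsto_add_atTop_iff_nat 1]
  have hcast : Tendsto (fun n : ℕ => ((n + 1 : ℕ) : ℝ)) atTop atTop :=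
    tendsto_natCast_atTop_atTop.comp (tendsto_add_atTop_nat 1)
  have hlo : (fun n : ℕ => u (n + 1) - c * (n + 1 : ℕ)) =o[atTop]
      fun n : ℕ => ((n + 1 : ℕ) : ℝ) := by
    refine Asymptotics.isLittleO_iff.mpr fun ε hε => ?_
    obtain ⟨K, hK⟩ := hu (ε / 3) (by positivity)
    have hlog := Asymptotics.isLittleO_iff.mp (Real.isLittleO_log_id_atTop.comp_tendsto hcast)
      (by positivity : 0 < ε / 3)
    filter_upwards [hlog, hcast.eventually_ge_atTop (3 * (K + |c|) / ε)] with n hn hn'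
    have h := hK n
    have hpos : (0 : ℝ) ≤ (n + 1 : ℕ) := by positivity
    simp only [Function.comp_apply, id, Real.norm_eq_abs, abs_of_nonneg hpos] at hn ⊢
    rw [div_le_iff₀ hε] at hn'
    push_cast at *
    have h1 := (abs_le.mp hn).2
    have h2 : |u (n + 1) - c * (n + 1)| ≤ |u (n + 1) - c * n| + |c| := by
      rw [show u (n + 1) - c * (n + 1) = (u (n + 1) - c * n) - c by ring]
      exact abs_sub _ _
    linarith
  have h := hlo.tendsto_div_nhds_zero.add_const c
  rw [zero_add] at h
  refine h.congr fun n => ?_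
  have : ((n + 1 : ℕ) : ℝ) ≠ 0 := by positivity
  field_simp
  ring

end LinearGrowth

section RandomWalk

variable {G : Type*} [Group G] {A B : Subgroup G} (hA : (A : Set G).Finite)
  (hB : (B : Set G).Finite)

theorem isProbMeasure_uniformElement_mul_pow (n : ℕ) :
    IsProbMeasure ((uniformElement A hA * uniformElement B hB) ^ n).coeff := by
  induction n with
  | zero => simpa using isProbMeasure_one
  | succ n ih =>
    rw [pow_succ, ← mul_assoc]
    exact (ih.mul_uniformElement hA).mul_uniformElement hB

theorem isProbMeasure_alternatingWord (i : ℕ × Bool × Bool) :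
    IsProbMeasure (alternatingWord (uniformElement A hA) (uniformElement B hB) i).coeff := by
  obtain ⟨j, s, t⟩ := i
  have h := isProbMeasure_uniformElement_mul_pow hA hB j
  cases s <;> cases t <;> simp only [alternatingWord, cond_true, cond_false, one_mul, mul_one]
  · exact h
  · exact h.mul_uniformElement hA
  · exact h.uniformElement_mul hB
  · exact (h.uniformElement_mul hB).mul_uniformElement hA

theorem abs_realEntropy_alternatingWord_sub_le (i : ℕ × Bool × Bool) :
    |realEntropy (alternatingWord (uniformElement A hA) (uniformElement B hB) i) -
      realEntropy ((uniformElement A hA * uniformElement B hB) ^ i.1)| ≤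
      Real.log hA.toFinset.card + Real.log hB.toFinset.card := by
  obtain ⟨j, s, t⟩ := i
  have h := isProbMeasure_uniformElement_mul_pow hA hB j
  have hlA := Real.log_natCast_nonneg hA.toFinset.card
  have hlB := Real.log_natCast_nonneg hB.toFinset.card
  cases s <;> cases t <;> simp only [alternatingWord, cond_true, cond_false, one_mul, mul_one]
  · simpa using add_nonneg hlA hlB
  · linarith [h.abs_realEntropy_mul_uniformElement_sub_le hA]
  · linarith [h.abs_realEntropy_uniformElement_mul_sub_le hB]
  · have h1 := (h.uniformElement_mul hB).abs_realEntropy_mul_uniformElement_sub_le hA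
    have h2 := h.abs_realEntropy_uniformElement_mul_sub_le hB
    exact (abs_sub_le _ _ _).trans (add_le_add h1 h2)

theorem isProbMeasure_convexCombination_pow {α β : ℝ} (hα : 0 ≤ α) (hβ : 0 ≤ β)
    (hαβ : α + β = 1) (n : ℕ) :
    IsProbMeasure ((α • uniformElement A hA + β • uniformElement B hB) ^ n).coeff := by
  rcases n with _ | n
  · simpa using isProbMeasure_one
  · obtain ⟨p, hp, -, h1, -, -, hpow⟩ := exists_pow_eq_linearCombination_alternatingWord
      (uniformElement_mul_self hA) (uniformElement_mul_self hB) hα hβ hαβ n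
    rw [hpow]
    exact isProbMeasure_mixture (fun i _ => hp i)
      (by simpa [Finsupp.linearCombination_apply, Finsupp.sum] using h1)
      fun i _ => isProbMeasure_alternatingWord hA hB i

theorem abs_realEntropy_convexCombination_pow_sub_le {α β : ℝ} (hα : 0 ≤ α) (hβ : 0 ≤ β)
    (hαβ : α + β = 1) {L ε K : ℝ}
    (hK : ∀ j : ℕ, |realEntropy ((uniformElement A hA * uniformElement B hB) ^ j) - L * j| ≤
      ε * j + K) (n : ℕ) :
    |realEntropy ((α • uniformElement A hA + β • uniformElement B hB) ^ (n + 1)) -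
      α * β * L * n| ≤ ε * (α * β) * n + (K + Real.log hA.toFinset.card +
        Real.log hB.toFinset.card + Real.log 4) + Real.log (n + 1) := by
  obtain ⟨p, hp, hs, h1, hj, -, hpow⟩ := exists_pow_eq_linearCombination_alternatingWord
    (uniformElement_mul_self hA) (uniformElement_mul_self hB) hα hβ hαβ n
  set W := alternatingWord (uniformElement A hA) (uniformElement B hB)
  set S : Finset (ℕ × Bool × Bool) := Finset.range (n + 1) ×ˢ Finset.univ
  simp only [Finsupp.linearCombination_apply] at h1 hj hpow
  rw [Finsupp.sum_of_support_subset _ hs _ (by simp)] at h1 hj hpow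
  simp only [smul_eq_mul, mul_one] at h1 hj
  have hlower := sum_mul_realEntropy_le (fun i _ => hp i) h1
    fun i _ => isProbMeasure_alternatingWord hA hB i
  have hupper := realEntropy_mixture_le (fun i _ => hp i) h1
    fun i _ => isProbMeasure_alternatingWord hA hB i
  have hcard : Real.log S.card = Real.log 4 + Real.log (n + 1) := by
    rw [← Real.log_mul (by norm_num) (by positivity)]
    congr 1
    simp [S]
    ring
  rw [hcard] at hupper
  set C := Real.log hA.toFinset.card + Real.log hB.toFinset.card with hC
  have hmean : |∑ i ∈ S, p i * realEntropy (W i) - α * β * L * n| ≤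
      ε * (α * β) * n + (K + C) := by
    calc |∑ i ∈ S, p i * realEntropy (W i) - α * β * L * n|
        = |∑ i ∈ S, p i * (realEntropy (W i) - L * i.1)| := by
          simp only [mul_sub, Finset.sum_sub_distrib, mul_left_comm _ L, ← Finset.mul_sum, hj]
          ring_nf
      _ ≤ ∑ i ∈ S, p i * (ε * i.1 + (K + C)) := by
          refine (Finset.abs_sum_le_sum_abs _ _).trans (Finset.sum_le_sum fun i _ => ?_)
          rw [abs_mul, abs_of_nonneg (hp i)]
          refine mul_le_mul_of_nonneg_left ?_ (hp i)
          have h2 := abs_realEntropy_alternatingWord_sub_le hA hB i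
          exact (abs_sub_le _ _ _).trans ((add_le_add h2 (hK i.1)).trans (by linarith))
      _ = ε * (α * β) * n + (K + C) := by
          simp only [mul_add, Finset.sum_add_distrib, ← Finset.sum_mul, h1,
            mul_left_comm _ ε, ← Finset.mul_sum, hj]
          ring
  rw [hpow]
  have h4 : 0 ≤ Real.log 4 := Real.log_nonneg (by norm_num)
  have hn : 0 ≤ Real.log (n + 1) := Real.log_nonneg (by simp)
  rw [abs_le] at hmean ⊢
  constructor <;> linarith

/-- Along the random walk driven by `αm_A + βm_B`, the normalized entropies converge to `αβ` times
the asymptotic entropy of `m_A * m_B`. -/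
theorem tendsto_realEntropy_convexCombination_pow_div {α β : ℝ} (hα : 0 ≤ α) (hβ : 0 ≤ β)
    (hαβ : α + β = 1) {L : ℝ}
    (hL : Tendsto (fun n : ℕ =>
      realEntropy ((uniformElement A hA * uniformElement B hB) ^ n) / n) atTop (𝓝 L)) :
    Tendsto (fun n : ℕ =>
      realEntropy ((α • uniformElement A hA + β • uniformElement B hB) ^ n) / n)
      atTop (𝓝 (α * β * L)) := by
  refine tendsto_div_of_abs_sub_le fun ε hε => ?_
  obtain ⟨K, hK⟩ := exists_abs_sub_mul_le hL hε
  refine ⟨_, fun n => (abs_realEntropy_convexCombination_pow_sub_le hA hB hα hβ hαβ hK n).trans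
    (add_le_add_left (add_le_add_left ?_ _) _)⟩
  have : α * β ≤ 1 := mul_le_one₀ (by linarith) hβ (by linarith)
  have : ε * (α * β) ≤ ε * 1 := mul_le_mul_of_nonneg_left this hε.le
  rw [mul_one] at this
  gcongr

end RandomWalk

/-- The entropy computation for the Mother group: with `μ = m_A * m_B` and
`μ̃ = ((d−1)/d) m_A + (1/d) m_B`, one has `h(G,μ̃) = ((d−1)/d²)·h(G,μ)`; in particular,
if `h(G,μ) ≤ d·h(G,μ̃)` then `h(G,μ) = 0`. -/
theorem asymptotic_entropy_mother_group_measures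
    {G : Type*} [Group G] [Countable G] (A B : Subgroup G)
    (hA : (A : Set G).Finite) (hB : (B : Set G).Finite)
    (d : ℕ) (hd : 2 ≤ d) (L : ℝ)
    (hL : Tendsto
      (fun n : ℕ =>
        (entropy (convPow (conv (uniformOnSubgroup A) (uniformOnSubgroup B)) n)).toReal / n)
      atTop (𝓝 L)) :
    Tendsto
      (fun n : ℕ =>
        (entropy (convPow
          (fun g : G => ((d - 1 : ℝ) / d) * uniformOnSubgroup A g
            + (1 / (d : ℝ)) * uniformOnSubgroup B g) n)).toReal / n)
      atTop (𝓝 (((d - 1 : ℝ) / (d : ℝ) ^ 2) * L)) ∧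
    (L ≤ (d : ℝ) * (((d - 1 : ℝ) / (d : ℝ) ^ 2) * L) → L = 0) := by
  have hd' : (2 : ℝ) ≤ d := by exact_mod_cast hd
  have hd0 : (0 : ℝ) < d := by linarith
  have hμ : conv (uniformOnSubgroup A) (uniformOnSubgroup B) =
      (uniformElement A hA * uniformElement B hB).coeff := by
    rw [← conv_coeff, uniformElement_coeff, uniformElement_coeff]
  have hν : (fun g : G => ((d - 1 : ℝ) / d) * uniformOnSubgroup A g
      + (1 / (d : ℝ)) * uniformOnSubgroup B g) =
      (((d - 1 : ℝ) / d) • uniformElement A hA + (1 / (d : ℝ)) • uniformElement B hB).coeff := by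
    funext g
    simp [← uniformElement_coeff hA, ← uniformElement_coeff hB]
  have hα : 0 ≤ (d - 1 : ℝ) / d := div_nonneg (by linarith) hd0.le
  have hβ : 0 ≤ 1 / (d : ℝ) := by positivity
  have hαβ : (d - 1 : ℝ) / d + 1 / d = 1 := by
    field_simp
    ring
  have hL0 : 0 ≤ L := ge_of_tendsto' hL fun n => by positivity
  simp only [hμ, convPow_coeff,
    (isProbMeasure_uniformElement_mul_pow hA hB _).toReal_entropy] at hL
  simp only [hν, convPow_coeff,
    (isProbMeasure_convexCombination_pow hA hB hα hβ hαβ _).toReal_entropy]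
  refine ⟨?_, fun h => ?_⟩
  · convert tendsto_realEntropy_convexCombination_pow_div hA hB hα hβ hαβ hL using 2
    field_simp
  · have h2 : (d : ℝ) * (((d - 1 : ℝ) / (d : ℝ) ^ 2) * L) = L - L / d := by
      field_simp
    have h3 : L / d ≤ 0 := by linarith
    have h4 : L ≤ 0 := by
      rw [div_le_iff₀ hd0] at h3
      linarith
    linarith
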